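/- In a simple polygon, every Euclidean shortest path between two points is also an L1 shortest path between them (with respect to paths constrained to the polygon). -/

import Mathlib

open scoped Classical

/-- Points in the plane. -/
abbrev Pt : Type := ℝ × ℝ

/-- The L1 distance between two points of the plane. -/
noncomputable def d1 (p q : Pt) : ℝ := |p.1 - q.1| + |p.2 - q.2|

/-- The L1 length of a polygonal path given by its list of vertices. -/
noncomputable def len : List Pt → ℝ
  | [] => 0
  | [_] => 0
  | p :: q :: r => d1 p q + len (q :: r)

/-- A polygonal path is monotone in the coordinate `f` if that coordinate is
(weakly) monotone along the path, in one of the two directions. -/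
def MonoCoord (f : Pt → ℝ) (L : List Pt) : Prop :=
  L.Chain' (fun a b => f a ≤ f b) ∨ L.Chain' (fun a b => f b ≤ f a)

/-- A polygonal path is xy-monotone if it is both x-monotone and y-monotone. -/
def XYMono (L : List Pt) : Prop := MonoCoord Prod.fst L ∧ MonoCoord Prod.snd L

/-- A polygonal path lies in a set `B` if all its vertices and all its
segments lie in `B`. -/
def PathIn (B : Set Pt) (L : List Pt) : Prop :=
  (∀ p ∈ L, p ∈ B) ∧ L.Chain' (fun a b => segment ℝ a b ⊆ B)

/-- Euclidean distance in the plane. -/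
noncomputable def d2 (p q : Pt) : ℝ := Real.sqrt ((p.1 - q.1) ^ 2 + (p.2 - q.2) ^ 2)

/-- Euclidean length of a polygonal path. -/
noncomputable def elen : List Pt → ℝ
  | [] => 0
  | [_] => 0
  | p :: q :: r => d2 p q + elen (q :: r)

/-- `L` is a Euclidean shortest path from `s` to `t` among polygonal paths in `B`. -/
def IsEucShortestIn (B : Set Pt) (s t : Pt) (L : List Pt) : Prop :=
  PathIn B L ∧ L.head? = some s ∧ L.getLast? = some t ∧
    ∀ M : List Pt, PathIn B M → M.head? = some s → M.getLast? = some t →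
      elen L ≤ elen M

/-- `L` is an L1 shortest path from `s` to `t` among polygonal paths in `B`. -/
def IsL1ShortestIn (B : Set Pt) (s t : Pt) (L : List Pt) : Prop :=
  PathIn B L ∧ L.head? = some s ∧ L.getLast? = some t ∧
    ∀ M : List Pt, PathIn B M → M.head? = some s → M.getLast? = some t →
      len L ≤ len M

/-- `B` is a simple polygon: a compact region, equal to the closure of its
interior, whose frontier is a simple closed polygonal curve on vertices
`v 0, …, v (n-1)`. -/
def IsSimplePolygon (B : Set Pt) : Prop :=
  ∃ (n : ℕ) (v : ZMod n → Pt), 3 ≤ n ∧ Function.Injective v ∧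
    IsCompact B ∧ B = closure (interior B) ∧
    frontier B = ⋃ i : ZMod n, segment ℝ (v i) (v (i + 1)) ∧
    (∀ i j : ZMod n, i ≠ j → j ≠ i + 1 → i ≠ j + 1 →
      segment ℝ (v i) (v (i + 1)) ∩ segment ℝ (v j) (v (j + 1)) = ∅) ∧
    (∀ i : ZMod n, segment ℝ (v i) (v (i + 1)) ∩ segment ℝ (v (i + 1)) (v (i + 1 + 1))
      = {v (i + 1)})

/-! ### Part 1: the complement of a simple polygon is connected -/

/-- Polar coordinates around `p`. -/
noncomputable def pol (p : Pt) (x : ℝ × ℝ) : Pt :=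
  (p.1 + x.1 * Real.cos x.2, p.2 + x.1 * Real.sin x.2)

lemma pol_cont (p : Pt) : Continuous (pol p) := by
  unfold pol; fun_prop

lemma pol_exists (p q : Pt) (h : q ≠ p) (α : ℝ) :
    ∃ ρ θ : ℝ, 0 < ρ ∧ α ≤ θ ∧ θ < α + 2 * Real.pi ∧ q = pol p (ρ, θ) := by
  set z : ℂ := ⟨q.1 - p.1, q.2 - p.2⟩ with hz
  have hz0 : z ≠ 0 := by
    intro h0
    apply h
    have h1 := congrArg Complex.re h0
    have h2 := congrArg Complex.im h0
    simp [hz] at h1 h2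
    ext <;> linarith
  have hpi : 0 < 2 * Real.pi := by positivity
  have hm := toIcoMod_mem_Ico hpi α z.arg
  refine ⟨‖z‖, toIcoMod hpi α z.arg, norm_pos_iff.mpr hz0, hm.1, hm.2, ?_⟩
  have e : toIcoMod hpi α z.arg = z.arg - toIcoDiv hpi α z.arg * (2 * Real.pi) := by
    rw [toIcoMod, zsmul_eq_mul]
  have h1 := Complex.norm_mul_cos_arg z
  have h2 := Complex.norm_mul_sin_arg z
  unfold pol
  simp only [e, Real.cos_sub_int_mul_two_pi, Real.sin_sub_int_mul_two_pi, h1, h2]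
  simp [hz]

lemma pol_sq (p : Pt) (ρ θ : ℝ) :
    ((pol p (ρ, θ)).1 - p.1) ^ 2 + ((pol p (ρ, θ)).2 - p.2) ^ 2 = ρ ^ 2 := by
  unfold pol
  simp only [add_sub_cancel_left]
  nlinarith [Real.sin_sq_add_cos_sq θ]

lemma pol_inj (p : Pt) {ρ θ t α : ℝ} (hρ : 0 < ρ) (ht : 0 < t)
    (h : pol p (ρ, θ) = pol p (t, α)) : ρ = t ∧ Real.cos (θ - α) = 1 := by
  have h1 := pol_sq p ρ θ
  rw [h, pol_sq] at h1
  have h2 : ρ = t := by nlinarith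
  refine ⟨h2, ?_⟩
  subst h2
  unfold pol at h
  simp only [Prod.mk.injEq, add_right_inj, mul_eq_mul_left_iff, hρ.ne', or_false] at h
  rw [Real.cos_sub, h.1, h.2]
  nlinarith [Real.sin_sq_add_cos_sq α]

lemma pol_seg (p : Pt) (A α ρ : ℝ) (h0 : 0 ≤ ρ) (h1 : ρ ≤ A) (hA : 0 < A) :
    pol p (ρ, α) ∈ segment ℝ p (pol p (A, α)) := by
  rw [segment_eq_image]
  refine ⟨ρ / A, ⟨by positivity, by rw [div_le_one hA]; exact h1⟩, ?_⟩
  unfold pol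
  ext <;> simp <;> field_simp <;> ring

lemma seg_pol (p q : Pt) (A α : ℝ) (hA : 0 < A)
    (h : q ∈ segment ℝ p (pol p (A, α))) (hq : q ≠ p) :
    ∃ t, 0 < t ∧ q = pol p (t, α) := by
  rw [segment_eq_image] at h
  obtain ⟨s, ⟨h0, h1⟩, rfl⟩ := h
  have hs : 0 < s := by
    rcases h0.lt_or_eq with h | h
    · exact h
    · exact absurd (by simp [← h]) hq
  refine ⟨s * A, by positivity, ?_⟩
  unfold pol
  ext <;> simp <;> ring

lemma local_conn (B K : Set Pt) (p a b : Pt) (hBc : B = closure (interior B))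
    (hK : IsClosed K) (hp : p ∉ K) (ha : a ≠ p) (hb : b ≠ p)
    (hF : frontier B = segment ℝ p a ∪ segment ℝ p b ∪ K)
    (hab : segment ℝ p a ∩ segment ℝ p b = {p}) :
    ∃ N : Set Pt, IsOpen N ∧ p ∈ N ∧ IsPreconnected (N ∩ Bᶜ) := by
  have hBcl : IsClosed B := by rw [hBc]; exact isClosed_closure
  obtain ⟨A, α, hA, -, -, rfl⟩ := pol_exists p a ha 0
  obtain ⟨C, β, hC, hβ1, hβ2, rfl⟩ := pol_exists p b hb α
  have hαβ : α < β := by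
    rcases hβ1.lt_or_eq with h | h
    · exact h
    · exfalso
      subst h
      have hm : 0 < min A C := lt_min hA hC
      have : pol p (min A C, α) ∈ ({p} : Set Pt) := by
        rw [← hab]
        exact ⟨pol_seg p A α _ hm.le (min_le_left _ _) hA,
          pol_seg p C α _ hm.le (min_le_right _ _) hC⟩
      have h2 := pol_sq p (min A C) α
      rw [Set.mem_singleton_iff.mp this] at h2
      simp at h2
      nlinarith
  obtain ⟨ε, hε, hball⟩ := Metric.isOpen_iff.mp hK.isOpen_compl p hp
  set r := min ε (min A C) with hr
  have hr0 : 0 < r := lt_min hε (lt_min hA hC)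
  have hrA : r ≤ A := (min_le_right _ _).trans (min_le_left _ _)
  have hrC : r ≤ C := (min_le_right _ _).trans (min_le_right _ _)
  set D : Set Pt := {q | (q.1 - p.1) ^ 2 + (q.2 - p.2) ^ 2 < r ^ 2} with hD
  have hDo : IsOpen D := isOpen_lt (by fun_prop) (by fun_prop)
  have hpD : p ∈ D := by simp [hD]; positivity
  have hDK : ∀ q ∈ D, q ∉ K := by
    intro q hq
    apply hball
    rw [Metric.mem_ball, Prod.dist_eq, Real.dist_eq, Real.dist_eq]
    have hq' : (q.1 - p.1) ^ 2 + (q.2 - p.2) ^ 2 < r ^ 2 := hq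
    apply lt_of_lt_of_le _ (min_le_left ε (min A C))
    apply max_lt
    · apply abs_lt_of_sq_lt_sq _ hr0.le
      nlinarith [sq_nonneg (q.2 - p.2)]
    · apply abs_lt_of_sq_lt_sq _ hr0.le
      nlinarith [sq_nonneg (q.1 - p.1)]
  set S1 := pol p '' (Set.Ioo 0 r ×ˢ Set.Ioo α β) with hS1
  set S2 := pol p '' (Set.Ioo 0 r ×ˢ Set.Ioo β (α + 2 * Real.pi)) with hS2
  have c1 : IsPreconnected S1 :=
    (isPreconnected_Ioo.prod isPreconnected_Ioo).image _ (pol_cont p).continuousOn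
  have c2 : IsPreconnected S2 :=
    (isPreconnected_Ioo.prod isPreconnected_Ioo).image _ (pol_cont p).continuousOn
  have hpolD : ∀ ρ θ, 0 < ρ → ρ < r → pol p (ρ, θ) ∈ D := by
    intro ρ θ h0 h1
    show ((pol p (ρ, θ)).1 - p.1) ^ 2 + ((pol p (ρ, θ)).2 - p.2) ^ 2 < r ^ 2
    rw [pol_sq]
    nlinarith
  have hpF : p ∈ frontier B := by rw [hF]; exact Or.inl (Or.inl (left_mem_segment ℝ _ _))
  have hnot : ∀ ρ θ, 0 < ρ → ρ < r → (θ - α ≠ 0) → (-(2*Real.pi) < θ - α) → (θ - α < 2 * Real.pi) →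
      (θ - β ≠ 0) → (-(2*Real.pi) < θ - β) → (θ - β < 2 * Real.pi) → pol p (ρ, θ) ∉ frontier B := by
    intro ρ θ h0 h1 a1 a2 a3 b1 b2 b3 hmem
    have hne : pol p (ρ, θ) ≠ p := by
      intro h
      have := pol_sq p ρ θ
      rw [h] at this
      simp at this
      nlinarith
    rw [hF] at hmem
    rcases hmem with (hm | hm) | hm
    · obtain ⟨t, ht, e⟩ := seg_pol p _ A α hA hm hne
      exact a1 ((Real.cos_eq_one_iff_of_lt_of_lt a2 a3).mp (pol_inj p h0 ht e).2)
    · obtain ⟨t, ht, e⟩ := seg_pol p _ C β hC hm hne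
      exact b1 ((Real.cos_eq_one_iff_of_lt_of_lt b2 b3).mp (pol_inj p h0 ht e).2)
    · exact hDK _ (hpolD ρ θ h0 h1) hm
  have hpi := Real.pi_pos
  have n1 : ∀ q ∈ S1, q ∈ D ∧ q ∉ frontier B := by
    rintro _ ⟨⟨ρ, θ⟩, ⟨⟨h1, h2⟩, ⟨h3, h4⟩⟩, rfl⟩
    simp only at h1 h2 h3 h4
    refine ⟨hpolD _ _ h1 h2, hnot _ _ h1 h2 ?_ ?_ ?_ ?_ ?_ ?_⟩ <;> linarith
  have n2 : ∀ q ∈ S2, q ∈ D ∧ q ∉ frontier B := by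
    rintro _ ⟨⟨ρ, θ⟩, ⟨⟨h1, h2⟩, ⟨h3, h4⟩⟩, rfl⟩
    simp only at h1 h2 h3 h4
    refine ⟨hpolD _ _ h1 h2, hnot _ _ h1 h2 ?_ ?_ ?_ ?_ ?_ ?_⟩ <;> linarith
  have hcov : ∀ q ∈ D, q ∉ frontier B → q ∈ S1 ∨ q ∈ S2 := by
    intro q hq hqF
    have hqp : q ≠ p := fun h => hqF (h ▸ hpF)
    obtain ⟨ρ, θ, h0, h1, h2, rfl⟩ := pol_exists p q hqp α
    have hρ : ρ < r := by
      have : ((pol p (ρ, θ)).1 - p.1) ^ 2 + ((pol p (ρ, θ)).2 - p.2) ^ 2 < r ^ 2 := hq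
      rw [pol_sq] at this
      exact lt_of_pow_lt_pow_left₀ 2 hr0.le this
    rcases h1.lt_or_eq with h1 | h1
    swap
    · exfalso; apply hqF; rw [hF, ← h1]
      exact Or.inl (Or.inl (pol_seg p A α ρ h0.le (hρ.le.trans hrA) hA))
    rcases lt_trichotomy θ β with h3 | h3 | h3
    · exact Or.inl ⟨(ρ, θ), ⟨⟨h0, hρ⟩, ⟨h1, h3⟩⟩, rfl⟩
    · exfalso; apply hqF; rw [hF, h3]
      exact Or.inl (Or.inr (pol_seg p C β ρ h0.le (hρ.le.trans hrC) hC))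
    · exact Or.inr ⟨(ρ, θ), ⟨⟨h0, hρ⟩, ⟨h3, h2⟩⟩, rfl⟩
  have hdis : Disjoint (interior B) Bᶜ :=
    Set.disjoint_compl_right_iff_subset.mpr interior_subset
  have hFc : ∀ q, q ∉ frontier B → q ∈ interior B ∪ Bᶜ := by
    intro q hq
    by_cases hqB : q ∈ B
    · left
      by_contra hqi
      exact hq ⟨subset_closure hqB, hqi⟩
    · exact Or.inr hqB
  have hcF : ∀ q ∈ Bᶜ, q ∉ frontier B := fun q hq h => hq (hBcl.frontier_subset h)
  have d1 := IsPreconnected.subset_or_subset isOpen_interior hBcl.isOpen_compl hdis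
    (fun q hq => hFc q (n1 q hq).2) c1
  have d2 := IsPreconnected.subset_or_subset isOpen_interior hBcl.isOpen_compl hdis
    (fun q hq => hFc q (n2 q hq).2) c2
  refine ⟨D, hDo, hpD, ?_⟩
  rcases d1 with d1 | d1 <;> rcases d2 with d2 | d2
  · convert isPreconnected_empty
    rw [Set.eq_empty_iff_forall_notMem]
    rintro q ⟨hqD, hqB⟩
    rcases hcov q hqD (hcF q hqB) with h | h
    · exact hqB (interior_subset (d1 h))
    · exact hqB (interior_subset (d2 h))
  · convert c2
    ext q
    constructor
    · rintro ⟨hqD, hqB⟩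
      rcases hcov q hqD (hcF q hqB) with h | h
      · exact absurd (interior_subset (d1 h)) hqB
      · exact h
    · exact fun h => ⟨(n2 q h).1, d2 h⟩
  · convert c1
    ext q
    constructor
    · rintro ⟨hqD, hqB⟩
      rcases hcov q hqD (hcF q hqB) with h | h
      · exact h
      · exact absurd (interior_subset (d2 h)) hqB
    · exact fun h => ⟨(n1 q h).1, d1 h⟩
  · exfalso
    have : p ∈ closure (interior B) := hBc ▸ hBcl.frontier_subset hpF
    obtain ⟨q, hqD, hqi⟩ := mem_closure_iff.mp this D hDo hpD
    have hqF : q ∉ frontier B := fun h => h.2 hqi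
    rcases hcov q hqD hqF with h | h
    · exact d1 h (interior_subset hqi)
    · exact d2 h (interior_subset hqi)

lemma compl_conn_of_local (B : Set Pt) (hB : IsClosed B) (hne : B.Nonempty)
    (hJ : IsPreconnected (frontier B))
    (hloc : ∀ p ∈ frontier B, ∃ N : Set Pt, IsOpen N ∧ p ∈ N ∧ IsPreconnected (N ∩ Bᶜ)) :
    IsPreconnected Bᶜ := by
  have key : ∀ u v : Set Pt, IsOpen u → IsOpen v → Bᶜ ⊆ u ∪ v → Bᶜ ∩ (u ∩ v) = ∅ →
      (∀ p ∈ frontier B, ∃ N : Set Pt, IsOpen N ∧ p ∈ N ∧ N ∩ Bᶜ ⊆ u) → Bᶜ ⊆ u := by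
    intro u v hu hv huv hd hN
    have hV : IsClopen (Bᶜ ∩ v) := by
      refine ⟨?_, hB.isOpen_compl.inter hv⟩
      apply isClosed_of_closure_subset
      intro y hy
      by_cases hyB : y ∈ B
      · exfalso
        have hyF : y ∈ frontier B := by
          rw [frontier_eq_closure_inter_closure]
          exact ⟨subset_closure hyB, closure_mono Set.inter_subset_left hy⟩
        obtain ⟨N, hNo, hyN, hNu⟩ := hN y hyF
        obtain ⟨z, hzN, hzB, hzv⟩ := mem_closure_iff.mp hy N hNo hyN
        have : z ∈ Bᶜ ∩ (u ∩ v) := ⟨hzB, hNu ⟨hzN, hzB⟩, hzv⟩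
        rw [hd] at this; exact this
      · refine ⟨hyB, ?_⟩
        rcases huv hyB with h | h
        · exfalso
          obtain ⟨z, hzu, hzB, hzv⟩ := mem_closure_iff.mp hy u hu h
          have : z ∈ Bᶜ ∩ (u ∩ v) := ⟨hzB, hzu, hzv⟩
          rw [hd] at this; exact this
        · exact h
    rcases isClopen_iff.mp hV with h | h
    · intro q hq
      rcases huv hq with h1 | h1
      · exact h1
      · have : q ∈ Bᶜ ∩ v := ⟨hq, h1⟩
        rw [h] at this; exact this.elim
    · obtain ⟨q, hq⟩ := hne
      have : q ∈ Bᶜ ∩ v := h ▸ Set.mem_univ q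
      exact absurd hq this.1
  rw [isPreconnected_iff_subset_of_disjoint]
  intro u v hu hv huv hd
  set Ju : Set Pt := ⋃₀ {N | IsOpen N ∧ N ∩ Bᶜ ⊆ u} with hJu
  set Jv : Set Pt := ⋃₀ {N | IsOpen N ∧ N ∩ Bᶜ ⊆ v} with hJv
  have := isPreconnected_iff_subset_of_disjoint.mp hJ Ju Jv
    (isOpen_sUnion fun N h => h.1) (isOpen_sUnion fun N h => h.1) ?_ ?_
  · rcases this with h | h
    · left
      refine key u v hu hv huv hd fun p hp => ?_
      obtain ⟨N, h1, h2⟩ := h hp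
      exact ⟨N, h1.1, h2, h1.2⟩
    · right
      refine key v u hv hu (by rwa [Set.union_comm]) (by rwa [Set.inter_comm v u]) fun p hp => ?_
      obtain ⟨N, h1, h2⟩ := h hp
      exact ⟨N, h1.1, h2, h1.2⟩
  · intro p hp
    obtain ⟨N, hN, hpN, hc⟩ := hloc p hp
    rcases isPreconnected_iff_subset_of_disjoint.mp hc u v hu hv
      (Set.inter_subset_right.trans huv) (by
        rw [Set.inter_assoc, hd, Set.inter_empty]) with h | h
    · exact Or.inl ⟨N, ⟨hN, h⟩, hpN⟩
    · exact Or.inr ⟨N, ⟨hN, h⟩, hpN⟩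
  · rw [Set.eq_empty_iff_forall_notMem]
    rintro p ⟨hp, ⟨N, ⟨hN, hNu⟩, hpN⟩, ⟨N', ⟨hN', hNv⟩, hpN'⟩⟩
    rw [frontier_eq_closure_inter_closure] at hp
    obtain ⟨z, ⟨h1, h2⟩, h3⟩ := mem_closure_iff.mp hp.2 (N ∩ N') (hN.inter hN') ⟨hpN, hpN'⟩
    have : z ∈ Bᶜ ∩ (u ∩ v) := ⟨h3, hNu ⟨h1, h3⟩, hNv ⟨h2, h3⟩⟩
    rw [hd] at this; exact this

lemma seg_split (a b p : Pt) (h : p ∈ segment ℝ a b) :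
    segment ℝ a b = segment ℝ p a ∪ segment ℝ p b := by
  apply Set.Subset.antisymm
  · intro q hq
    rw [segment_eq_image] at h hq
    obtain ⟨s, ⟨s0, s1⟩, rfl⟩ := h
    obtain ⟨t, ⟨t0, t1⟩, rfl⟩ := hq
    rcases le_total t s with hts | hts
    · left
      rcases s0.lt_or_eq with h0 | h0
      · rw [segment_eq_image]
        refine ⟨1 - t / s, ⟨?_, ?_⟩, ?_⟩
        · rw [sub_nonneg, div_le_one h0]; exact hts
        · have : 0 ≤ t / s := by positivity
          linarith
        · ext <;> simp <;> field_simp <;> ring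
      · have : t = 0 := by linarith
        subst this; subst h0
        exact left_mem_segment ℝ _ _
    · right
      rcases s1.lt_or_eq with h0 | h0
      · have h0' : 0 < 1 - s := by linarith
        rw [segment_eq_image]
        refine ⟨(t - s) / (1 - s), ⟨?_, ?_⟩, ?_⟩
        · exact div_nonneg (by linarith) h0'.le
        · rw [div_le_one h0']; linarith
        · ext <;> simp <;> field_simp <;> ring
      · have : t = 1 := by linarith
        subst this; subst h0
        exact left_mem_segment ℝ _ _
  · apply Set.union_subset
    · exact (convex_segment a b).segment_subset h (left_mem_segment ℝ _ _)
    · exact (convex_segment a b).segment_subset h (right_mem_segment ℝ _ _)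

lemma seg_split_inter (a b p : Pt) (h : p ∈ segment ℝ a b) (hab : a ≠ b) :
    segment ℝ p a ∩ segment ℝ p b = {p} := by
  apply Set.Subset.antisymm
  · rintro q ⟨h1, h2⟩
    rw [segment_eq_image] at h h1 h2
    obtain ⟨s, ⟨s0, s1⟩, rfl⟩ := h
    obtain ⟨t, ⟨t0, t1⟩, rfl⟩ := h1
    obtain ⟨t', ⟨t0', t1'⟩, e⟩ := h2
    simp only at e
    have e1 := congrArg Prod.fst e
    have e2 := congrArg Prod.snd e
    simp at e1 e2
    have hz : t * s + t' * (1 - s) = 0 := by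
      by_contra hne
      apply hab
      have f1 : (t * s + t' * (1 - s)) * (b.1 - a.1) = 0 := by linear_combination e1
      have f2 : (t * s + t' * (1 - s)) * (b.2 - a.2) = 0 := by linear_combination e2
      have g1 := (mul_eq_zero.mp f1).resolve_left hne
      have g2 := (mul_eq_zero.mp f2).resolve_left hne
      ext <;> linarith
    have hts : t * s = 0 := by nlinarith [mul_nonneg t0 s0, mul_nonneg t0' (sub_nonneg.mpr s1)]
    simp only [Set.mem_singleton_iff]
    ext <;> simp
    · linear_combination (b.1 - a.1) * (-hts)
    · linear_combination (b.2 - a.2) * (-hts)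
  · rintro q rfl
    exact ⟨left_mem_segment ℝ _ _, left_mem_segment ℝ _ _⟩

lemma polygon_compl (B : Set Pt) (hB : IsSimplePolygon B) :
    IsCompact B ∧ IsPreconnected Bᶜ := by
  obtain ⟨n, v, hn, hv, hcomp, hreg, hF, hnonadj, hadj⟩ := hB
  refine ⟨hcomp, ?_⟩
  have : NeZero n := ⟨by omega⟩
  have : Fact (1 < n) := ⟨by omega⟩
  have h10 : (1 : ZMod n) ≠ 0 := one_ne_zero
  have hsucc : ∀ i : ZMod n, i + 1 ≠ i := fun i h => h10 (by simp at h)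
  have h20 : (1 : ZMod n) + 1 ≠ 0 := by
    intro h
    have : ((2 : ℕ) : ZMod n) = 0 := by push_cast; rw [← h]; norm_num
    rw [ZMod.natCast_eq_zero_iff] at this
    have := Nat.le_of_dvd (by norm_num) this
    omega
  have hcl := hcomp.isClosed
  have hmem : ∀ i, v i ∈ frontier B := fun i => by
    rw [hF]; exact Set.mem_iUnion.mpr ⟨i, left_mem_segment ℝ _ _⟩
  apply compl_conn_of_local B hcl ⟨v 0, hcl.frontier_subset (hmem 0)⟩
  · rw [hF]
    apply IsPreconnected.iUnion_of_reflTransGen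
    · exact fun i => (convex_segment _ _).isPreconnected
    · intro i j
      have : ∀ k : ℕ, Relation.ReflTransGen (fun i j =>
          (segment ℝ (v i) (v (i + 1)) ∩ segment ℝ (v j) (v (j + 1))).Nonempty) i (i + (k : ZMod n)) := by
        intro k
        induction k with
        | zero => simpa using Relation.ReflTransGen.refl
        | succ k ih =>
          refine ih.tail ?_
          refine ⟨v (i + k + 1), right_mem_segment ℝ _ _, ?_⟩
          push_cast
          rw [← add_assoc]
          exact left_mem_segment ℝ _ _
      have h := this (j - i).val
      rwa [ZMod.natCast_zmod_val, add_sub_cancel] at h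
  · intro p hp
    have hp' := hp
    rw [hF] at hp'
    obtain ⟨i, hi⟩ := Set.mem_iUnion.mp hp'
    have vertex : ∀ i, ∃ N : Set Pt, IsOpen N ∧ v (i + 1) ∈ N ∧ IsPreconnected (N ∩ Bᶜ) := by
      intro i
      apply local_conn B (⋃ j ∈ {j | j ≠ i ∧ j ≠ i + 1}, segment ℝ (v j) (v (j + 1)))
        (v (i + 1)) (v i) (v (i + 1 + 1)) hreg
      · apply Set.Finite.isClosed_biUnion (Set.toFinite _)
        intro j _
        rw [← convexHull_pair]
        exact (Set.Finite.isCompact_convexHull ℝ (Set.toFinite _)).isClosed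
      · intro h
        simp only [Set.mem_iUnion] at h
        obtain ⟨j, ⟨hj1, hj2⟩, hj⟩ := h
        by_cases hij : i = j + 1
        · subst hij
          have : v (j + 1 + 1) ∈ ({v (j + 1)} : Set Pt) := by
            rw [← hadj j]; exact ⟨hj, right_mem_segment ℝ _ _⟩
          exact hsucc _ (hv this)
        · have : v (i + 1) ∈ (∅ : Set Pt) := by
            rw [← hnonadj i j (Ne.symm hj1) hj2 hij]
            exact ⟨right_mem_segment ℝ _ _, hj⟩
          exact this
      · exact fun h => hsucc i (hv h).symm
      · exact fun h => hsucc _ (hv h)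
      · rw [hF]
        ext q
        simp only [Set.mem_iUnion, Set.mem_union, segment_symm ℝ (v (i+1)) (v i)]
        constructor
        · rintro ⟨j, hj⟩
          by_cases h1 : j = i
          · subst h1; exact Or.inl (Or.inl hj)
          by_cases h2 : j = i + 1
          · subst h2; exact Or.inl (Or.inr hj)
          exact Or.inr ⟨j, ⟨h1, h2⟩, hj⟩
        · rintro ((h | h) | ⟨j, -, h⟩)
          · exact ⟨_, h⟩
          · exact ⟨_, h⟩
          · exact ⟨_, h⟩
      · rw [segment_symm ℝ (v (i+1)) (v i)]; exact hadj i
    by_cases hp1 : p = v i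
    · have := vertex (i - 1)
      rw [sub_add_cancel, ← hp1] at this
      exact this
    by_cases hp2 : p = v (i + 1)
    · rw [hp2]; exact vertex i
    apply local_conn B (⋃ j ∈ {j | j ≠ i}, segment ℝ (v j) (v (j + 1)))
        p (v i) (v (i + 1)) hreg
    · apply Set.Finite.isClosed_biUnion (Set.toFinite _)
      intro j _
      rw [← convexHull_pair]
      exact (Set.Finite.isCompact_convexHull ℝ (Set.toFinite _)).isClosed
    · intro h
      simp only [Set.mem_iUnion] at h
      obtain ⟨j, hj1, hj⟩ := h
      by_cases h1 : j = i + 1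
      · subst h1
        have : p ∈ ({v (i + 1)} : Set Pt) := by
          rw [← hadj i]; exact ⟨hi, hj⟩
        exact hp2 this
      by_cases h2 : i = j + 1
      · subst h2
        have : p ∈ ({v (j + 1)} : Set Pt) := by
          rw [← hadj j]; exact ⟨hj, hi⟩
        exact hp1 this
      have : p ∈ (∅ : Set Pt) := by
        rw [← hnonadj i j (Ne.symm hj1) h1 h2]
        exact ⟨hi, hj⟩
      exact this
    · exact Ne.symm hp1
    · exact Ne.symm hp2
    · rw [hF, ← seg_split _ _ _ hi]
      ext q
      simp only [Set.mem_iUnion, Set.mem_union]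
      constructor
      · rintro ⟨j, hj⟩
        by_cases h1 : j = i
        · subst h1; exact Or.inl hj
        exact Or.inr ⟨j, h1, hj⟩
      · rintro (h | ⟨j, -, h⟩)
        · exact ⟨_, h⟩
        · exact ⟨_, h⟩
    · exact seg_split_inter _ _ _ hi (fun h => hsucc i (hv h).symm)

/-! ### Part 2: angle sums along polygonal paths -/

/-- The plane as complex numbers. -/
def toC (p : Pt) : ℂ := ⟨p.1, p.2⟩

lemma toC_cont : Continuous toC := by
  have : toC = fun p => Complex.equivRealProdCLM.symm p := by
    funext p; apply Complex.ext <;> simp [toC]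
  rw [this]; fun_prop

lemma toC_inj {p q : Pt} (h : toC p = toC q) : p = q := by
  have h1 := congrArg Complex.re h
  have h2 := congrArg Complex.im h
  exact Prod.ext h1 h2

/-- The ratio whose argument is the angle under which `q` sees the edge `a b`. -/
noncomputable def rat (a b q : Pt) : ℂ := (toC b - toC q) / (toC a - toC q)

/-- Total signed angle swept by a polygonal path as seen from `q`. -/
noncomputable def ang (q : Pt) : List Pt → ℝ
  | [] => 0
  | [_] => 0
  | a :: b :: r => (rat a b q).arg + ang q (b :: r)

/-- `q` does not lie on any edge. -/
def Off (q : Pt) (P : List Pt) : Prop := P.IsChain (fun a b => q ∉ segment ℝ a b)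

lemma sub_ne {a b q : Pt} (h : q ∉ segment ℝ a b) : toC a - toC q ≠ 0 ∧ toC b - toC q ≠ 0 := by
  constructor
  · intro h0
    exact h ((toC_inj (sub_eq_zero.mp h0)) ▸ left_mem_segment ℝ _ _)
  · intro h0
    exact h ((toC_inj (sub_eq_zero.mp h0)) ▸ right_mem_segment ℝ _ _)

lemma rat_slit {a b q : Pt} (h : q ∉ segment ℝ a b) : rat a b q ∈ Complex.slitPlane := by
  rw [Complex.mem_slitPlane_iff]
  by_contra hcon
  push Not at hcon
  obtain ⟨h1, h2⟩ := hcon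
  apply h
  have hne := (sub_ne h).1
  set k := -(rat a b q).re with hk
  have e : rat a b q = ((-k : ℝ) : ℂ) := by
    apply Complex.ext
    · simp [hk]
    · simpa using h2
  unfold rat at e
  rw [div_eq_iff hne] at e
  have e1 := congrArg Complex.re e
  have e2 := congrArg Complex.im e
  simp [toC] at e1 e2
  have hk0 : 0 ≤ k := by linarith
  have hk1 : 0 < 1 + k := by linarith
  rw [segment_eq_image]
  refine ⟨1 / (1 + k), ⟨by positivity, by rw [div_le_one hk1]; linarith⟩, ?_⟩
  ext
  · simp; field_simp; linarith
  · simp; field_simp; linarith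

lemma rat_contAt {a b q : Pt} (h : toC a - toC q ≠ 0) : ContinuousAt (rat a b) q := by
  unfold rat
  have := toC_cont.continuousAt (x := q)
  exact (continuousAt_const.sub this).div (continuousAt_const.sub this) h

lemma ang_contAt (q : Pt) : ∀ P : List Pt, Off q P → ContinuousAt (fun x => ang x P) q
  | [], _ => by simpa [ang] using continuousAt_const
  | [_], _ => by simpa [ang] using continuousAt_const
  | a :: b :: r, h => by
    have h' := List.isChain_cons_cons.mp h
    have := ang_contAt q (b :: r) h'.2
    simp only [ang]
    refine ContinuousAt.add ?_ this
    exact ContinuousAt.comp (f := rat a b) (Complex.continuousAt_arg (rat_slit h'.1))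
      (rat_contAt (sub_ne h'.1).1)

/-- Unit vector in the direction of `z`. -/
noncomputable def sg (z : ℂ) : ℂ := z / (‖z‖ : ℂ)

lemma exp_arg (z : ℂ) (hz : z ≠ 0) : Complex.exp (z.arg * Complex.I) = sg z := by
  unfold sg
  rw [eq_div_iff (by simpa using hz), mul_comm]
  exact Complex.norm_mul_exp_arg_mul_I z

lemma sg_div (z w : ℂ) : sg (z / w) = sg z / sg w := by
  unfold sg
  rw [norm_div]
  push_cast
  rw [div_div_div_comm]

lemma sg_ne {z : ℂ} (hz : z ≠ 0) : sg z ≠ 0 := by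
  unfold sg; simpa using hz

lemma exp_ang (q : Pt) : ∀ (P : List Pt) (s t : Pt), Off q P → P.head? = some s →
    P.getLast? = some t →
    Complex.exp (ang q P * Complex.I) * sg (toC s - toC q) = sg (toC t - toC q)
  | [], s, t, _, h, _ => by simp at h
  | [a], s, t, _, h, h' => by
    simp at h h'
    subst h; subst h'
    simp [ang]
  | a :: b :: r, s, t, h, h1, h2 => by
    have h' := List.isChain_cons_cons.mp h
    have ih := exp_ang q (b :: r) b t h'.2 (by simp) (by simpa using h2)
    simp at h1
    subst h1
    have hne := sub_ne h'.1
    rw [← ih]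
    simp only [ang]
    push_cast
    rw [add_mul, Complex.exp_add, exp_arg _ (by unfold rat; exact div_ne_zero hne.2 hne.1)]
    unfold rat
    rw [sg_div]
    have := sg_ne hne.1
    field_simp

/-- An angle function that is constant modulo `2π` on a preconnected set is constant. -/
lemma const_of_exp {X : Type*} [TopologicalSpace X] (S : Set X) (hS : IsPreconnected S) (f : X → ℝ)
    (hf : ContinuousOn f S) (w : ℂ) (h : ∀ x ∈ S, Complex.exp (f x * Complex.I) = w) :
    ∀ x ∈ S, ∀ y ∈ S, f x = f y := by
  have key : ∀ x ∈ S, ∀ y ∈ S, ∃ n : ℤ, f y = f x + n * (2 * Real.pi) := by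
    intro x hx y hy
    have := (h y hy).trans (h x hx).symm
    obtain ⟨n, hn⟩ := Complex.exp_eq_exp_iff_exists_int.mp this
    refine ⟨n, ?_⟩
    have e := congrArg Complex.im hn
    simpa using e
  have hpi := Real.pi_pos
  have key2 : ∀ x ∈ S, ∀ y ∈ S, ¬ f x < f y := by
    intro x hx y hy hlt
    obtain ⟨n, hn⟩ := key x hx y hy
    have hn0 : (0 : ℝ) < n := by
      by_contra hc
      push Not at hc
      nlinarith
    have hn1 : (1 : ℝ) ≤ n := by exact_mod_cast (by exact_mod_cast hn0 : (0 : ℤ) < n)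
    obtain ⟨z, hz, hfz⟩ := hS.intermediate_value hx hy hf
      (show f x + Real.pi ∈ Set.Icc (f x) (f y) from ⟨by linarith, by nlinarith⟩)
    obtain ⟨m, hm⟩ := key x hx z hz
    have : (m : ℝ) * 2 = 1 := by
      have : ((m : ℝ) * 2 - 1) * Real.pi = 0 := by linarith
      rcases mul_eq_zero.mp this with h | h <;> linarith
    have : m * 2 = 1 := by exact_mod_cast this
    omega
  intro x hx y hy
  exact le_antisymm (not_lt.mp (key2 y hy x hx)) (not_lt.mp (key2 x hx y hy))

/-- Seen from far to the right, the angle sum telescopes. -/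
lemma ang_far (q : Pt) : ∀ (P : List Pt) (s t : Pt), (∀ a ∈ P, a.1 < q.1) → P.head? = some s →
    P.getLast? = some t → ang q P = (toC q - toC t).arg - (toC q - toC s).arg
  | [], s, t, _, h, _ => by simp at h
  | [a], s, t, _, h, h' => by
    simp at h h'
    subst h; subst h'
    simp [ang]
  | a :: b :: r, s, t, h, h1, h2 => by
    have ih := ang_far q (b :: r) b t (fun x hx => h x (List.mem_cons_of_mem _ hx)) (by simp)
      (by simpa using h2)
    simp at h1
    subst h1
    have ha : 0 < (toC q - toC a).re := by
      have := h a (by simp); simp [toC]; exact this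
    have hb : 0 < (toC q - toC b).re := by
      have := h b (by simp); simp [toC]; exact this
    have ha0 : toC q - toC a ≠ 0 := fun h0 => by rw [h0] at ha; simp at ha
    have hb0 : toC q - toC b ≠ 0 := fun h0 => by rw [h0] at hb; simp at hb
    simp only [ang]
    rw [ih]
    have e : rat a b q * (toC q - toC a) = toC q - toC b := by
      unfold rat
      have : toC a - toC q ≠ 0 := fun h0 => ha0 (by rw [← neg_sub, h0, neg_zero])
      field_simp
      ring
    have ha1 := abs_lt.mp (Complex.abs_arg_lt_pi_div_two_iff.mpr (Or.inl ha))
    have hb1 := abs_lt.mp (Complex.abs_arg_lt_pi_div_two_iff.mpr (Or.inl hb))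
    have h3 : (rat a b q).arg = (toC q - toC b).arg - (toC q - toC a).arg := by
      have e2 : rat a b q = (toC q - toC b) * (toC q - toC a)⁻¹ := by
        rw [← e]; field_simp
      have e3 : ((toC q - toC a)⁻¹).arg = - (toC q - toC a).arg := by
        rw [Complex.arg_inv, if_neg]
        linarith [Real.pi_pos]
      have e4 := (Complex.arg_mul_eq_add_arg_iff hb0 (inv_ne_zero ha0)).mpr
        (by rw [e3]; constructor <;> linarith)
      rw [e2, e4, e3, sub_eq_add_neg (Complex.arg _)]
    rw [h3]; ring

lemma off_of_pathIn {B : Set Pt} {P : List Pt} (h : PathIn B P) {q : Pt} (hq : q ∉ B) : Off q P :=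
  List.IsChain.imp (fun _ _ hab hmem => hq (hab hmem)) h.2

/-- The closed curve formed by two paths in `B` does not wind around points outside `B`. -/
lemma winding_zero (B : Set Pt) (hB : IsCompact B) (hc : IsPreconnected Bᶜ) (s t : Pt)
    (L M : List Pt) (hL : PathIn B L) (hM : PathIn B M) (hLs : L.head? = some s)
    (hLt : L.getLast? = some t) (hMs : M.head? = some s) (hMt : M.getLast? = some t)
    (q : Pt) (hq : q ∉ B) : ang q L = ang q M := by
  obtain ⟨R, hR⟩ := (hB.image continuous_fst).bddAbove
  have hR' : ∀ a ∈ B, a.1 < R + 1 := fun a ha => by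
    have := hR (Set.mem_image_of_mem Prod.fst ha)
    linarith
  set z : Pt := (R + 1, 0) with hz
  have hzB : z ∉ B := fun h => lt_irrefl _ (hR' z h)
  have hz0 : ang z L - ang z M = 0 := by
    rw [ang_far z L s t (fun a ha => hR' a (hL.1 a ha)) hLs hLt,
      ang_far z M s t (fun a ha => hR' a (hM.1 a ha)) hMs hMt, sub_self]
  have := const_of_exp Bᶜ hc (fun x => ang x L - ang x M) ?_ 1 ?_ q hq z hzB
  · simp only [hz0] at this; linarith
  · intro x hx
    exact ((ang_contAt x L (off_of_pathIn hL hx)).sub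
      (ang_contAt x M (off_of_pathIn hM hx))).continuousWithinAt
  · intro x hx
    have e1 := exp_ang x L s t (off_of_pathIn hL hx) hLs hLt
    have e2 := exp_ang x M s t (off_of_pathIn hM hx) hMs hMt
    have hsB : s ∈ B := hL.1 s (List.mem_of_mem_head? (by rw [hLs]; rfl))
    have hsx : toC s - toC x ≠ 0 := fun h => hx (toC_inj (sub_eq_zero.mp h) ▸ hsB)
    have e3 := mul_right_cancel₀ (sg_ne hsx) (e1.trans e2.symm)
    push_cast
    rw [sub_mul, Complex.exp_sub, e3, div_self (Complex.exp_ne_zero _)]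

lemma ang_append (q : Pt) : ∀ (A : List Pt) (a : Pt) (C : List Pt),
    ang q (A ++ a :: C) = ang q (A ++ [a]) + ang q (a :: C)
  | [], a, C => by simp [ang]
  | [x], a, C => by simp [ang]
  | x :: y :: r, a, C => by
    have := ang_append q (y :: r) a C
    simp only [List.cons_append, ang] at this ⊢
    rw [this]; ring

/-! ### Part 3: crossings with vertical lines -/

/-- The edge `a b` crosses the vertical line `x = c`. -/
def cr (c : ℝ) (a b : Pt) : Prop := (a.1 < c ∧ c < b.1) ∨ (b.1 < c ∧ c < a.1)

/-- The height at which the line through `a` and `b` meets `x = c`. -/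
noncomputable def ht (c : ℝ) (a b : Pt) : ℝ := a.2 + (c - a.1) / (b.1 - a.1) * (b.2 - a.2)

/-- The heights of the crossings of a path with `x = c`. -/
noncomputable def hts (c : ℝ) : List Pt → List ℝ
  | [] => []
  | [_] => []
  | a :: b :: r => if cr c a b then ht c a b :: hts c (b :: r) else hts c (b :: r)

lemma hts_append (c : ℝ) : ∀ (A : List Pt) (a : Pt) (C : List Pt),
    hts c (A ++ a :: C) = hts c (A ++ [a]) ++ hts c (a :: C)
  | [], a, C => by simp [hts]
  | [x], a, C => by by_cases h : cr c x a <;> simp [hts, h]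
  | x :: y :: r, a, C => by
    have := hts_append c (y :: r) a C
    simp only [List.cons_append, hts] at this ⊢
    rw [this]
    by_cases h : cr c x y <;> simp [h]

lemma hts_mem (c y : ℝ) : ∀ (P : List Pt), y ∈ hts c P →
    ∃ A a b C, P = A ++ a :: b :: C ∧ cr c a b ∧ y = ht c a b
  | [], h => by simp [hts] at h
  | [x], h => by simp [hts] at h
  | a :: b :: r, h => by
    have ih := hts_mem c y (b :: r)
    have hrec : y ∈ hts c (b :: r) →
        ∃ A a' b' C, a :: b :: r = A ++ a' :: b' :: C ∧ cr c a' b' ∧ y = ht c a' b' := by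
      intro hy
      obtain ⟨A, a', b', C, e, h1, h2⟩ := ih hy
      exact ⟨a :: A, a', b', C, by rw [e]; rfl, h1, h2⟩
    simp only [hts] at h
    split_ifs at h with hc
    · rcases List.mem_cons.mp h with h | h
      · exact ⟨[], a, b, r, rfl, hc, h⟩
      · exact hrec h
    · exact hrec h

lemma ht_mem_seg {c : ℝ} {a b : Pt} (h : cr c a b) : ((c, ht c a b) : Pt) ∈ segment ℝ a b := by
  rw [segment_eq_image]
  have hne : b.1 - a.1 ≠ 0 := by
    rcases h with h | h
    · linarith [h.1, h.2]
    · intro h0; linarith [h.1, h.2]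
  refine ⟨(c - a.1) / (b.1 - a.1), ⟨?_, ?_⟩, ?_⟩
  · rcases h with h | h
    · exact div_nonneg (by linarith) (by linarith)
    · exact div_nonneg_of_nonpos (by linarith) (by linarith)
  · rcases h with h | h
    · rw [div_le_one (by linarith)]; linarith
    · rw [div_le_one_of_neg (by linarith)]; linarith
  · ext
    · simp; field_simp; ring
    · simp [ht]; ring

lemma seg_on_line {c w : ℝ} {a b : Pt} (ha : a.1 ≠ c) (hb : b.1 ≠ c)
    (h : ((c, w) : Pt) ∈ segment ℝ a b) : cr c a b ∧ w = ht c a b := by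
  rw [segment_eq_image] at h
  obtain ⟨t, ⟨h0, h1⟩, e⟩ := h
  have e1 := congrArg Prod.fst e
  have e2 := congrArg Prod.snd e
  simp at e1 e2
  have hcr : cr c a b := by
    rcases lt_or_gt_of_ne ha with ha | ha <;> rcases lt_or_gt_of_ne hb with hb | hb
    · exfalso
      rcases h0.lt_or_eq with h0 | h0
      · nlinarith
      · subst h0; simp at e1; linarith
    · exact Or.inl ⟨ha, hb⟩
    · exact Or.inr ⟨hb, ha⟩
    · exfalso
      rcases h0.lt_or_eq with h0 | h0
      · nlinarith
      · subst h0; simp at e1; linarith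
  refine ⟨hcr, ?_⟩
  have hne : b.1 - a.1 ≠ 0 := by
    rcases hcr with h | h
    · linarith [h.1, h.2]
    · intro h0; linarith [h.1, h.2]
  have ht' : t = (c - a.1) / (b.1 - a.1) := by
    rw [eq_div_iff hne]; linarith
  unfold ht
  rw [← ht', ← e2]; ring

lemma off_of_not_mem {c w : ℝ} : ∀ P : List Pt, (∀ p ∈ P, p.1 ≠ c) → w ∉ hts c P →
    Off ((c, w) : Pt) P
  | [], _, _ => List.IsChain.nil
  | [_], _, _ => List.IsChain.singleton _
  | a :: b :: r, h, hw => by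
    have ih := off_of_not_mem (c := c) (w := w) (b :: r) (fun p hp => h p (List.mem_cons_of_mem _ hp))
    refine List.isChain_cons_cons.mpr ⟨?_, ih ?_⟩
    · intro hs
      obtain ⟨h1, h2⟩ := seg_on_line (h a (by simp)) (h b (by simp)) hs
      apply hw
      simp [hts, h1, h2]
    · intro hy
      apply hw
      simp only [hts]
      split_ifs
      · exact List.mem_cons_of_mem _ hy
      · exact hy

lemma rat_im {c w : ℝ} {a b : Pt} (h : cr c a b) :
    (rat a b (c, w)).im * Complex.normSq (toC a - toC (c, w)) = (b.1 - a.1) * (w - ht c a b) := by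
  have hne : b.1 - a.1 ≠ 0 := by
    rcases h with h | h
    · linarith [h.1, h.2]
    · intro h0; linarith [h.1, h.2]
  have hac : a.1 - c ≠ 0 := by
    rcases h with h | h
    · intro h0; linarith [h.1, h.2]
    · linarith [h.1, h.2]
  have hN : Complex.normSq (toC a - toC (c, w)) ≠ 0 := by
    rw [Ne, Complex.normSq_eq_zero]
    intro h0
    have := congrArg Complex.re h0
    simp [toC] at this
    exact hac this
  unfold rat
  rw [Complex.div_im, sub_mul, div_mul_cancel₀ _ hN, div_mul_cancel₀ _ hN]
  simp [toC, ht]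
  field_simp
  ring

lemma rat_re {c : ℝ} {a b : Pt} (h : cr c a b) : (rat a b (c, ht c a b)).re < 0 := by
  have hs := ht_mem_seg h
  have hne : b.1 - a.1 ≠ 0 := by
    rcases h with h | h
    · linarith [h.1, h.2]
    · intro h0; linarith [h.1, h.2]
  have hac : a.1 - c ≠ 0 := by
    rcases h with h | h
    · intro h0; linarith [h.1, h.2]
    · linarith [h.1, h.2]
  have hE : toC a - toC (c, ht c a b) ≠ 0 := by
    intro h0
    have := congrArg Complex.re h0
    simp [toC] at this
    exact hac this
  have e : rat a b (c, ht c a b) = (((b.1 - c) / (a.1 - c) : ℝ) : ℂ) := by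
    unfold rat
    rw [div_eq_iff hE]
    apply Complex.ext
    · rw [Complex.re_ofReal_mul]
      simp [toC]; field_simp
    · rw [Complex.im_ofReal_mul]
      simp [toC, ht]; field_simp; ring
  rw [e, Complex.ofReal_re]
  rcases h with h | h
  · exact div_neg_of_pos_of_neg (by linarith) (by linarith)
  · exact div_neg_of_neg_of_pos (by linarith) (by linarith)

lemma no_single_crossing (B : Set Pt) (hB : IsCompact B) (hc : IsPreconnected Bᶜ) (s t : Pt)
    (A C M : List Pt) (a b : Pt) (hL : PathIn B (A ++ a :: b :: C)) (hM : PathIn B M)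
    (hLs : (A ++ a :: b :: C).head? = some s)
    (hLt : (A ++ a :: b :: C).getLast? = some t)
    (hMs : M.head? = some s) (hMt : M.getLast? = some t)
    (c y₁ y₂ : ℝ) (hx : ∀ p ∈ A ++ a :: b :: C, p.1 ≠ c) (hcr : cr c a b)
    (h1 : y₁ < ht c a b) (h2 : ht c a b < y₂) (n1 : ((c, y₁) : Pt) ∉ B) (n2 : ((c, y₂) : Pt) ∉ B)
    (o1 : ∀ w ∈ Set.Icc y₁ y₂, Off ((c, w) : Pt) (A ++ [a]))
    (o2 : ∀ w ∈ Set.Icc y₁ y₂, Off ((c, w) : Pt) (b :: C))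
    (o3 : ∀ w ∈ Set.Icc y₁ y₂, Off ((c, w) : Pt) M) : False := by
  have hne : ∀ p ∈ A ++ a :: b :: C, ∀ w, toC p - toC (c, w) ≠ 0 := by
    intro p hp w h0
    have := congrArg Complex.re h0
    simp [toC] at this
    exact hx p hp (by linarith)
  have hsL : s ∈ A ++ a :: b :: C := List.mem_of_mem_head? (by rw [hLs]; rfl)
  have htL : t ∈ A ++ a :: b :: C := List.mem_of_getLast? hLt
  have haL : a ∈ A ++ a :: b :: C := by simp
  have hbL : b ∈ A ++ a :: b :: C := by simp
  have hwz : ∀ w, ((c, w) : Pt) ∉ B → ang (c, w) (A ++ [a]) + ang (c, w) (b :: C) - ang (c, w) M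
      = - (rat a b (c, w)).arg := by
    intro w hw
    have := winding_zero B hB hc s t _ M hL hM hLs hLt hMs hMt (c, w) hw
    rw [ang_append] at this
    simp only [ang] at this
    linarith
  have hconst := const_of_exp (Set.Icc y₁ y₂) isPreconnected_Icc
    (fun w => ang (c, w) (A ++ [a]) + ang (c, w) (b :: C) - ang (c, w) M + (-rat a b (c, w)).arg)
    ?_ (-1) ?_ y₁ ⟨le_rfl, by linarith⟩ y₂ ⟨by linarith, le_rfl⟩
  · rw [hwz y₁ n1, hwz y₂ n2] at hconst
    have i1 := rat_im (w := y₁) hcr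
    have i2 := rat_im (w := y₂) hcr
    have p1 : 0 < Complex.normSq (toC a - toC (c, y₁)) := Complex.normSq_pos.mpr (hne a haL y₁)
    have p2 : 0 < Complex.normSq (toC a - toC (c, y₂)) := Complex.normSq_pos.mpr (hne a haL y₂)
    have hpi := Real.pi_pos
    rcases hcr with h | h
    · have j1 : (rat a b (c, y₁)).im < 0 := by
        have : (b.1 - a.1) * (y₁ - ht c a b) < 0 :=
          mul_neg_of_pos_of_neg (by linarith) (by linarith)
        by_contra hcon
        push Not at hcon
        nlinarith [mul_nonneg hcon p1.le]
      have j2 : 0 < (rat a b (c, y₂)).im := by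
        have : 0 < (b.1 - a.1) * (y₂ - ht c a b) :=
          mul_pos (by linarith) (by linarith)
        by_contra hcon
        push Not at hcon
        nlinarith [mul_nonneg (neg_nonneg.mpr hcon) p2.le]
      rw [Complex.arg_neg_eq_arg_add_pi_of_im_neg j1,
        Complex.arg_neg_eq_arg_sub_pi_of_im_pos j2] at hconst
      linarith
    · have j1 : 0 < (rat a b (c, y₁)).im := by
        have : 0 < (b.1 - a.1) * (y₁ - ht c a b) :=
          mul_pos_of_neg_of_neg (by linarith) (by linarith)
        by_contra hcon
        push Not at hcon
        nlinarith [mul_nonneg (neg_nonneg.mpr hcon) p1.le]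
      have j2 : (rat a b (c, y₂)).im < 0 := by
        have : (b.1 - a.1) * (y₂ - ht c a b) < 0 :=
          mul_neg_of_neg_of_pos (by linarith) (by linarith)
        by_contra hcon
        push Not at hcon
        nlinarith [mul_nonneg hcon p2.le]
      rw [Complex.arg_neg_eq_arg_sub_pi_of_im_pos j1,
        Complex.arg_neg_eq_arg_add_pi_of_im_neg j2] at hconst
      linarith
  · intro w hw
    apply ContinuousAt.continuousWithinAt
    have hl : ContinuousAt (fun w : ℝ => ((c, w) : Pt)) w := by fun_prop
    refine ContinuousAt.add (ContinuousAt.sub (ContinuousAt.add ?_ ?_) ?_) ?_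
    · exact ContinuousAt.comp (f := fun w : ℝ => ((c, w) : Pt))
        (g := fun x => ang x (A ++ [a])) (ang_contAt _ _ (o1 w hw)) hl
    · exact ContinuousAt.comp (f := fun w : ℝ => ((c, w) : Pt))
        (g := fun x => ang x (b :: C)) (ang_contAt _ _ (o2 w hw)) hl
    · exact ContinuousAt.comp (f := fun w : ℝ => ((c, w) : Pt))
        (g := fun x => ang x M) (ang_contAt _ _ (o3 w hw)) hl
    · have hslit : -rat a b (c, w) ∈ Complex.slitPlane := by
        rw [Complex.mem_slitPlane_iff]
        by_cases hwy : w = ht c a b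
        · left
          rw [hwy, Complex.neg_re]
          linarith [rat_re hcr]
        · right
          intro h0
          rw [Complex.neg_im, neg_eq_zero] at h0
          have := rat_im (w := w) hcr
          rw [h0, zero_mul] at this
          rcases mul_eq_zero.mp this.symm with h | h
          · rcases hcr with h' | h' <;> linarith [h'.1, h'.2]
          · exact hwy (by linarith)
      exact ContinuousAt.comp (f := fun w : ℝ => -rat a b (c, w)) (Complex.continuousAt_arg hslit)
        (ContinuousAt.neg (ContinuousAt.comp (f := fun w : ℝ => ((c, w) : Pt)) (g := rat a b)
          (rat_contAt (hne a haL w)) hl))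
  · intro w hw
    have hA : (A ++ [a]).head? = some s := by
      rw [← hLs]; cases A <;> rfl
    have hC : (b :: C).getLast? = some t := by
      rw [← hLt]; simp [List.getLast?_append, List.getLast?_cons]
    have e1 := exp_ang (c, w) _ s a (o1 w hw) hA (by simp)
    have e2 := exp_ang (c, w) _ b t (o2 w hw) (by simp) hC
    have e3 := exp_ang (c, w) _ s t (o3 w hw) hMs hMt
    have ea := hne a haL w
    have eb := hne b hbL w
    have e4 : Complex.exp ((-rat a b (c, w)).arg * Complex.I) =
        -(sg (toC b - toC (c, w)) / sg (toC a - toC (c, w))) := by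
      rw [exp_arg (-rat a b (c, w)) (neg_ne_zero.mpr (div_ne_zero eb ea))]
      have : -rat a b (c, w) = -(toC b - toC (c, w)) / (toC a - toC (c, w)) := by
        unfold rat; ring
      rw [this, sg_div]
      unfold sg
      rw [norm_neg]; ring
    have f1 := sg_ne (hne s hsL w)
    have f2 := sg_ne (hne t htL w)
    have f3 := sg_ne ea
    have f4 := sg_ne eb
    push_cast
    rw [add_mul, sub_mul, add_mul, Complex.exp_add, Complex.exp_sub, Complex.exp_add, e4,
      eq_div_of_mul_eq f1 e1, eq_div_of_mul_eq f4 e2, eq_div_of_mul_eq f1 e3]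
    field_simp

/-! ### Part 4: shortest paths and crossing numbers -/

/-- Two points of the line `x = c` see each other inside `B`. -/
def Vis (B : Set Pt) (c y z : ℝ) : Prop := ∀ w ∈ Set.uIcc y z, ((c, w) : Pt) ∈ B

lemma Vis.symm {B : Set Pt} {c y z : ℝ} (h : Vis B c y z) : Vis B c z y := by
  intro w hw; apply h; rwa [Set.uIcc_comm]

lemma Vis.trans {B : Set Pt} {c y z u : ℝ} (h : Vis B c y z) (h' : Vis B c z u) :
    Vis B c y u := by
  intro w hw
  rcases Set.uIcc_subset_uIcc_union_uIcc (b := z) hw with h1 | h1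
  · exact h w h1
  · exact h' w h1

lemma vis_seg {B : Set Pt} {c y z : ℝ} (h : Vis B c y z) :
    segment ℝ ((c, y) : Pt) ((c, z) : Pt) ⊆ B := by
  intro q hq
  rw [segment_eq_image] at hq
  obtain ⟨t, ⟨h0, h1⟩, rfl⟩ := hq
  have : (1 - t) • ((c, y) : Pt) + t • ((c, z) : Pt) = (c, (1 - t) * y + t * z) := by
    ext
    · simp; ring
    · simp
  simp only [this]
  apply h
  rw [← segment_eq_uIcc, segment_eq_image]
  exact ⟨t, ⟨h0, h1⟩, by simp⟩

lemma exists_above (B : Set Pt) (hB : IsCompact B) (c y : ℝ) (Z : List ℝ)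
    (hZ : ∀ z ∈ Z, ¬ Vis B c y z) (hZB : ∀ z ∈ Z, ((c, z) : Pt) ∈ B) (hy : ((c, y) : Pt) ∈ B) :
    ∃ y₂, y < y₂ ∧ ((c, y₂) : Pt) ∉ B ∧ ∀ z ∈ Z, z ∉ Set.Icc y y₂ := by
  induction Z with
  | nil =>
    obtain ⟨R, hR⟩ := (hB.image continuous_snd).bddAbove
    have h1 := hR (Set.mem_image_of_mem Prod.snd hy)
    simp only at h1
    refine ⟨R + 1, by linarith, fun h => ?_, by simp⟩
    have := hR (Set.mem_image_of_mem Prod.snd h)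
    simp only at this
    linarith
  | cons z Z ih =>
    obtain ⟨y₂, h1, h2, h3⟩ := ih (fun z hz => hZ z (List.mem_cons_of_mem _ hz))
      (fun z hz => hZB z (List.mem_cons_of_mem _ hz))
    by_cases hz : z ∈ Set.Icc y y₂
    · have := hZ z (by simp)
      unfold Vis at this
      push Not at this
      obtain ⟨w, hw, hwB⟩ := this
      rw [Set.uIcc_of_le hz.1] at hw
      have hwy : w ≠ y := fun h => hwB (h ▸ hy)
      have hwz : w ≠ z := fun h => hwB (h ▸ hZB z (by simp))
      refine ⟨w, lt_of_le_of_ne hw.1 hwy.symm, hwB, fun z' hz' hm => ?_⟩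
      rcases List.mem_cons.mp hz' with h | h
      · subst h
        exact hwz (le_antisymm hw.2 hm.2)
      · exact h3 z' h ⟨hm.1, hm.2.trans (hw.2.trans hz.2)⟩
    · refine ⟨y₂, h1, h2, fun z' hz' => ?_⟩
      rcases List.mem_cons.mp hz' with h | h
      · rwa [h]
      · exact h3 z' h

lemma exists_below (B : Set Pt) (hB : IsCompact B) (c y : ℝ) (Z : List ℝ)
    (hZ : ∀ z ∈ Z, ¬ Vis B c y z) (hZB : ∀ z ∈ Z, ((c, z) : Pt) ∈ B) (hy : ((c, y) : Pt) ∈ B) :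
    ∃ y₁, y₁ < y ∧ ((c, y₁) : Pt) ∉ B ∧ ∀ z ∈ Z, z ∉ Set.Icc y₁ y := by
  induction Z with
  | nil =>
    obtain ⟨R, hR⟩ := (hB.image continuous_snd).bddBelow
    have h1 := hR (Set.mem_image_of_mem Prod.snd hy)
    simp only at h1
    refine ⟨R - 1, by linarith, fun h => ?_, by simp⟩
    have := hR (Set.mem_image_of_mem Prod.snd h)
    simp only at this
    linarith
  | cons z Z ih =>
    obtain ⟨y₁, h1, h2, h3⟩ := ih (fun z hz => hZ z (List.mem_cons_of_mem _ hz))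
      (fun z hz => hZB z (List.mem_cons_of_mem _ hz))
    by_cases hz : z ∈ Set.Icc y₁ y
    · have := hZ z (by simp)
      unfold Vis at this
      push Not at this
      obtain ⟨w, hw, hwB⟩ := this
      rw [Set.uIcc_of_ge hz.2] at hw
      have hwy : w ≠ y := fun h => hwB (h ▸ hy)
      have hwz : w ≠ z := fun h => hwB (h ▸ hZB z (by simp))
      refine ⟨w, lt_of_le_of_ne hw.2 hwy, hwB, fun z' hz' hm => ?_⟩
      rcases List.mem_cons.mp hz' with h | h
      · subst h
        exact hwz (le_antisymm hm.1 hw.1)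
      · exact h3 z' h ⟨(hz.1.trans hw.1).trans hm.1, hm.2⟩
    · refine ⟨y₁, h1, h2, fun z' hz' => ?_⟩
      rcases List.mem_cons.mp hz' with h | h
      · rwa [h]
      · exact h3 z' h

/-- A path that is shortest among the paths with the same endpoints. -/
def Short (B : Set Pt) (L : List Pt) : Prop :=
  PathIn B L ∧ ∀ M : List Pt, PathIn B M → M.head? = L.head? → M.getLast? = L.getLast? →
    elen L ≤ elen M

lemma elen_append : ∀ (A : List Pt) (a : Pt) (C : List Pt),
    elen (A ++ a :: C) = elen (A ++ [a]) + elen (a :: C)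
  | [], a, C => by simp [elen]
  | [x], a, C => by simp [elen]
  | x :: y :: r, a, C => by
    have := elen_append (y :: r) a C
    simp only [List.cons_append, elen] at this ⊢
    rw [this]; ring

lemma d2_eq (p q : Pt) : d2 p q = ‖toC p - toC q‖ := by
  rw [Complex.norm_def, Complex.normSq_apply]
  unfold d2
  congr 1
  simp [toC]; ring

lemma d2_tri (p q r : Pt) : d2 p r ≤ d2 p q + d2 q r := by
  simp only [d2_eq]
  exact norm_sub_le_norm_sub_add_norm_sub _ _ _

lemma elen_ge : ∀ (P : List Pt) (s t : Pt), P.head? = some s → P.getLast? = some t →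
    d2 s t ≤ elen P
  | [], s, t, h, _ => by simp at h
  | [a], s, t, h, h' => by
    simp at h h'
    subst h; subst h'
    simp [elen, d2]
  | a :: b :: r, s, t, h1, h2 => by
    have ih := elen_ge (b :: r) b t (by simp) (by simpa using h2)
    simp at h1
    subst h1
    simp only [elen]
    linarith [d2_tri a b t]

lemma d2_split {a b p : Pt} (h : p ∈ segment ℝ a b) : d2 a b = d2 a p + d2 p b := by
  rw [segment_eq_image] at h
  obtain ⟨t, ⟨h0, h1⟩, rfl⟩ := h
  simp only [d2_eq]
  have e1 : toC a - toC ((1 - t) • a + t • b) = (t : ℂ) * (toC a - toC b) := by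
    apply Complex.ext
    · rw [Complex.re_ofReal_mul]; simp [toC]; ring
    · rw [Complex.im_ofReal_mul]; simp [toC]; ring
  have e2 : toC ((1 - t) • a + t • b) - toC b = ((1 - t : ℝ) : ℂ) * (toC a - toC b) := by
    apply Complex.ext
    · rw [Complex.re_ofReal_mul]; simp [toC]; ring
    · rw [Complex.im_ofReal_mul]; simp [toC]; ring
  rw [e1, e2, norm_mul, norm_mul, Complex.norm_real, Complex.norm_real, Real.norm_of_nonneg h0,
    Real.norm_of_nonneg (by linarith)]
  ring

lemma d2_vert (c y z : ℝ) : d2 ((c, y) : Pt) ((c, z) : Pt) = |y - z| := by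
  unfold d2; simp [Real.sqrt_sq_eq_abs]

lemma d2_gt (p b : Pt) (h : b.1 ≠ p.1) : |p.2 - b.2| < d2 p b := by
  unfold d2
  apply Real.lt_sqrt_of_sq_lt
  rw [sq_abs]
  have : 0 < (p.1 - b.1) ^ 2 := by
    have : p.1 - b.1 ≠ 0 := fun h0 => h (by linarith)
    positivity
  linarith

lemma d2_ge (p b : Pt) : |p.2 - b.2| ≤ d2 p b := by
  unfold d2
  apply Real.le_sqrt_of_sq_le
  rw [sq_abs]
  nlinarith [sq_nonneg (p.1 - b.1)]

lemma short_tail {B : Set Pt} {a b : Pt} {r : List Pt} (h : Short B (a :: b :: r)) :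
    Short B (b :: r) := by
  obtain ⟨⟨h1, h2⟩, h3⟩ := h
  have h2' := List.isChain_cons_cons.mp h2
  refine ⟨⟨fun p hp => h1 p (List.mem_cons_of_mem _ hp), h2'.2⟩, ?_⟩
  intro M hM hs ht
  match M, hM, hs, ht with
  | [], _, hs, _ => simp at hs
  | m :: M', hM, hs, ht =>
    simp at hs
    subst hs
    have := h3 (a :: m :: M') ⟨?_, List.isChain_cons_cons.mpr ⟨h2'.1, hM.2⟩⟩ (by simp)
      (by rw [List.getLast?_cons_cons, ht, List.getLast?_cons_cons])
    · simp only [elen] at this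
      linarith
    · intro p hp
      rcases List.mem_cons.mp hp with h | h
      · rw [h]; exact h1 a (by simp)
      · exact hM.1 p h

lemma not_vis_of_short {B : Set Pt} {a b : Pt} {r : List Pt} (h : Short B (a :: b :: r))
    {c : ℝ} (hcr : cr c a b) {z : ℝ} (hz : z ∈ hts c (b :: r)) :
    ¬ Vis B c (ht c a b) z := by
  intro hv
  obtain ⟨A, d, e, C, hP, hde, hzz⟩ := hts_mem c z _ hz
  obtain ⟨⟨h1, h2⟩, h3⟩ := h
  rw [hP] at h1 h2 h3
  have sp := ht_mem_seg hcr
  have sq := ht_mem_seg hde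
  rw [← hzz] at sq
  set p : Pt := (c, ht c a b) with hp
  set q : Pt := (c, z) with hq
  have hpq := vis_seg hv
  have hab : segment ℝ a b ⊆ B := by
    have : List.IsChain (fun a b => segment ℝ a b ⊆ B) (a :: b :: r) := by rw [hP]; exact h2
    exact (List.isChain_cons_cons.mp this).1
  have h2' : List.IsChain (fun a b => segment ℝ a b ⊆ B) ((a :: A) ++ d :: e :: C) := h2
  have hdeC := (List.isChain_append.mp h2').2.1
  have hde' := (List.isChain_cons_cons.mp hdeC).1
  have heC := (List.isChain_cons_cons.mp hdeC).2
  have le := h3 (a :: p :: q :: e :: C) ⟨?_, ?_⟩ (by simp) (by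
    rw [List.getLast?_cons_cons, List.getLast?_cons_cons, List.getLast?_cons_cons]
    rw [← List.cons_append, List.getLast?_append]
    simp [List.getLast?_cons])
  · have e0 : elen (a :: (A ++ d :: e :: C)) = d2 a b + elen (b :: r) := by
      rw [← hP]; rfl
    rw [e0, hP, elen_append] at le
    simp only [elen] at le
    have g := elen_ge (A ++ [d]) b d (by
      have : (b :: r).head? = some b := rfl
      rw [hP] at this
      rw [← this]; cases A <;> rfl) (by simp)
    rw [d2_split sp, d2_split sq] at le
    have k1 := d2_gt p b (by
      simp only [hp]
      rcases hcr with h | h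
      · exact h.2.ne'
      · exact h.1.ne)
    have k2 := d2_ge b d
    have k3 := d2_ge d q
    have k4 : d2 p q = |p.2 - q.2| := d2_vert c _ _
    have k5 : |p.2 - q.2| ≤ |p.2 - b.2| + |b.2 - d.2| + |d.2 - q.2| := by
      have := abs_sub_le p.2 b.2 q.2
      have := abs_sub_le b.2 d.2 q.2
      linarith
    linarith
  · intro x hx
    simp only [List.mem_cons] at hx
    rcases hx with rfl | rfl | rfl | rfl | hx
    · exact h1 _ (by simp)
    · exact hab sp
    · exact hde' sq
    · exact h1 _ (by simp)
    · exact h1 _ (by simp [hx])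
  · refine List.isChain_cons_cons.mpr ⟨?_, List.isChain_cons_cons.mpr ⟨hpq,
      List.isChain_cons_cons.mpr ⟨?_, heC⟩⟩⟩
    · exact ((convex_segment a b).segment_subset (left_mem_segment ℝ _ _) sp).trans hab
    · exact ((convex_segment d e).segment_subset sq (right_mem_segment ℝ _ _)).trans hde'

lemma short_pairwise {B : Set Pt} (c : ℝ) : ∀ L : List Pt, Short B L →
    (hts c L).Pairwise (fun y z => ¬ Vis B c y z)
  | [], _ => by simp [hts]
  | [_], _ => by simp [hts]
  | a :: b :: r, h => by
    have ih := short_pairwise c (b :: r) (short_tail h)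
    simp only [hts]
    split_ifs with hcr
    · exact List.pairwise_cons.mpr ⟨fun z hz => not_vis_of_short h hcr hz, ih⟩
    · exact ih

lemma hts_in_B {B : Set Pt} {c y : ℝ} {P : List Pt} (hP : PathIn B P) (hy : y ∈ hts c P) :
    ((c, y) : Pt) ∈ B := by
  obtain ⟨A, a, b, C, rfl, h1, rfl⟩ := hts_mem c y P hy
  exact (List.isChain_cons_cons.mp (List.isChain_append.mp hP.2).2.1).1 (ht_mem_seg h1)

/-! ### Part 5: comparison of the crossing numbers and integration -/

lemma exists_vis (B : Set Pt) (hB : IsCompact B) (hc : IsPreconnected Bᶜ)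
    (L M : List Pt) (hL : Short B L) (hM : PathIn B M) (s t : Pt)
    (hLs : L.head? = some s) (hLt : L.getLast? = some t)
    (hMs : M.head? = some s) (hMt : M.getLast? = some t) (c : ℝ)
    (hxL : ∀ p ∈ L, p.1 ≠ c) (hxM : ∀ p ∈ M, p.1 ≠ c) (y : ℝ) (hy : y ∈ hts c L) :
    ∃ z ∈ hts c M, Vis B c y z := by
  by_contra hcon
  push Not at hcon
  have hyB := hts_in_B hL.1 hy
  have hpw := short_pairwise c L hL
  obtain ⟨A, a, b, C, rfl, hcr, rfl⟩ := hts_mem c y L hy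
  have hAC : hts c (A ++ a :: b :: C) = hts c (A ++ [a]) ++ ht c a b :: hts c (b :: C) := by
    rw [hts_append]; simp [hts, hcr]
  have hZB : ∀ z ∈ hts c (A ++ [a]) ++ hts c (b :: C) ++ hts c M, ((c, z) : Pt) ∈ B := by
    intro z hz
    rcases List.mem_append.mp hz with hz | hz
    · apply hts_in_B hL.1
      rw [hAC]
      rcases List.mem_append.mp hz with hz | hz
      · exact List.mem_append_left _ hz
      · exact List.mem_append_right _ (List.mem_cons_of_mem _ hz)
    · exact hts_in_B hM hz
  have hZ : ∀ z ∈ hts c (A ++ [a]) ++ hts c (b :: C) ++ hts c M, ¬ Vis B c (ht c a b) z := by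
    rw [hAC, List.pairwise_append] at hpw
    intro z hz
    rcases List.mem_append.mp hz with hz | hz
    · rcases List.mem_append.mp hz with hz | hz
      · exact fun hv => hpw.2.2 z hz _ (by simp) hv.symm
      · exact (List.pairwise_cons.mp hpw.2.1).1 z hz
    · exact hcon z hz
  obtain ⟨y₂, u1, u2, u3⟩ := exists_above B hB c _ _ hZ hZB hyB
  obtain ⟨y₁, l1, l2, l3⟩ := exists_below B hB c _ _ hZ hZB hyB
  have hoff : ∀ w ∈ Set.Icc y₁ y₂, w ∉ hts c (A ++ [a]) ++ hts c (b :: C) ++ hts c M := by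
    intro w hw hmem
    rcases le_total w (ht c a b) with h | h
    · exact l3 w hmem ⟨hw.1, h⟩
    · exact u3 w hmem ⟨h, hw.2⟩
  refine no_single_crossing B hB hc s t A C M a b hL.1 hM hLs hLt hMs hMt c y₁ y₂ hxL hcr
    l1 u1 l2 u2 ?_ ?_ ?_
  · intro w hw
    apply off_of_not_mem
    · intro p hp
      apply hxL
      rcases List.mem_append.mp hp with hp | hp
      · exact List.mem_append_left _ hp
      · simp at hp; subst hp; simp
    · exact fun h => hoff w hw (List.mem_append_left _ (List.mem_append_left _ h))
  · intro w hw
    apply off_of_not_mem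
    · intro p hp
      exact hxL p (List.mem_append_right _ (List.mem_cons_of_mem _ hp))
    · exact fun h => hoff w hw (List.mem_append_left _ (List.mem_append_right _ h))
  · intro w hw
    apply off_of_not_mem
    · exact hxM
    · exact fun h => hoff w hw (List.mem_append_right _ h)

lemma crossing_le (B : Set Pt) (hB : IsCompact B) (hc : IsPreconnected Bᶜ)
    (L M : List Pt) (hL : Short B L) (hM : PathIn B M) (s t : Pt)
    (hLs : L.head? = some s) (hLt : L.getLast? = some t)
    (hMs : M.head? = some s) (hMt : M.getLast? = some t) (c : ℝ)
    (hxL : ∀ p ∈ L, p.1 ≠ c) (hxM : ∀ p ∈ M, p.1 ≠ c) :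
    (hts c L).length ≤ (hts c M).length := by
  have hex := exists_vis B hB hc L M hL hM s t hLs hLt hMs hMt c hxL hxM
  have hpw := short_pairwise c L hL
  have hrefl : ∀ y ∈ hts c L, Vis B c y y := by
    intro y hy w hw
    simp at hw
    subst hw
    exact hts_in_B hL.1 hy
  have hnd : (hts c L).Nodup := by
    refine List.Pairwise.imp_of_mem ?_ hpw
    intro y z hy hz h e
    subst e
    exact h (hrefl y hy)
  choose! f hf1 hf2 using hex
  have hinj : Set.InjOn f ((hts c L).toFinset : Set ℝ) := by
    intro y hy z hz e
    simp only [List.coe_toFinset, Set.mem_setOf_eq] at hy hz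
    by_contra hne
    have hv : Vis B c y z := (hf2 y hy).trans (by rw [e]; exact (hf2 z hz).symm)
    have hsym : Std.Symm (fun y z => y ≠ z → ¬ Vis B c y z) :=
      ⟨fun a b h1 h2 h3 => h1 h2.symm h3.symm⟩
    have := (List.Pairwise.forall_of_forall (R := fun y z => y ≠ z → ¬ Vis B c y z)
      (l := hts c L) (fun _ _ h => absurd rfl h)
      (List.Pairwise.imp (S := fun y z => y ≠ z → ¬ Vis B c y z) (fun h _ => h) hpw)) hy hz
    exact this hne hv
  calc (hts c L).length = (hts c L).toFinset.card := (List.toFinset_card_of_nodup hnd).symm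
    _ ≤ (hts c M).toFinset.card := Finset.card_le_card_of_injOn f (by
        intro y hy
        simp at hy ⊢
        exact hf1 y hy) hinj
    _ ≤ (hts c M).length := List.toFinset_card_le _

/-- Total horizontal variation of a path. -/
noncomputable def lenx : List Pt → ℝ
  | [] => 0
  | [_] => 0
  | p :: q :: r => |p.1 - q.1| + lenx (q :: r)

lemma integral_hts : ∀ P : List Pt,
    MeasureTheory.Integrable (fun c => ((hts c P).length : ℝ)) ∧
      ∫ c, ((hts c P).length : ℝ) = lenx P
  | [] => by simp [hts, lenx]
  | [_] => by simp [hts, lenx]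
  | a :: b :: r => by
    obtain ⟨ih1, ih2⟩ := integral_hts (b :: r)
    have e : (fun c => ((hts c (a :: b :: r)).length : ℝ)) =
        fun c => (Set.Ioo (min a.1 b.1) (max a.1 b.1)).indicator (fun _ => (1 : ℝ)) c +
          ((hts c (b :: r)).length : ℝ) := by
      funext c
      have hiff : c ∈ Set.Ioo (min a.1 b.1) (max a.1 b.1) ↔ cr c a b := by
        unfold cr
        simp only [Set.mem_Ioo, min_lt_iff, lt_max_iff]
        constructor
        · rintro ⟨h1 | h1, h2 | h2⟩
          · linarith
          · exact Or.inl ⟨h1, h2⟩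
          · exact Or.inr ⟨h1, h2⟩
          · linarith
        · rintro (⟨h1, h2⟩ | ⟨h1, h2⟩)
          · exact ⟨Or.inl h1, Or.inr h2⟩
          · exact ⟨Or.inr h1, Or.inl h2⟩
      simp only [hts]
      by_cases h : cr c a b
      · rw [if_pos h, Set.indicator_of_mem (hiff.mpr h)]
        push_cast [List.length_cons]; ring
      · rw [if_neg h, Set.indicator_of_notMem (fun h' => h (hiff.mp h'))]
        ring
    have hi : MeasureTheory.Integrable
        ((Set.Ioo (min a.1 b.1) (max a.1 b.1)).indicator (fun _ => (1 : ℝ))) := by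
      rw [MeasureTheory.integrable_indicator_iff measurableSet_Ioo]
      exact MeasureTheory.integrableOn_const (by simp)
    rw [e]
    refine ⟨hi.add ih1, ?_⟩
    rw [MeasureTheory.integral_add hi ih1, ih2, MeasureTheory.integral_indicator measurableSet_Ioo]
    simp only [lenx, add_left_inj]
    simp
    rw [max_sub_min_eq_abs, abs_sub_comm]

lemma lenx_le (B : Set Pt) (hB : IsCompact B) (hc : IsPreconnected Bᶜ)
    (L M : List Pt) (hL : Short B L) (hM : PathIn B M) (s t : Pt)
    (hLs : L.head? = some s) (hLt : L.getLast? = some t)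
    (hMs : M.head? = some s) (hMt : M.getLast? = some t) : lenx L ≤ lenx M := by
  rw [← (integral_hts L).2, ← (integral_hts M).2]
  apply MeasureTheory.integral_mono_ae (integral_hts L).1 (integral_hts M).1
  filter_upwards [((L ++ M).map Prod.fst).toFinset.finite_toSet.countable.ae_notMem
      MeasureTheory.volume] with c hcn
  have hcn' : ∀ p ∈ L ++ M, p.1 ≠ c := by
    intro p hp e
    apply hcn
    simp only [List.coe_toFinset, Set.mem_setOf_eq]
    exact List.mem_map.mpr ⟨p, hp, e⟩
  have := crossing_le B hB hc L M hL hM s t hLs hLt hMs hMt c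
    (fun p hp => hcn' p (List.mem_append_left _ hp))
    (fun p hp => hcn' p (List.mem_append_right _ hp))
  exact_mod_cast this

/-! ### Part 6: exchanging the coordinates -/

lemma pathIn_swap {B : Set Pt} {P : List Pt} (h : PathIn B P) :
    PathIn (Prod.swap ⁻¹' B) (P.map Prod.swap) := by
  refine ⟨?_, ?_⟩
  · intro p hp
    obtain ⟨q, hq, rfl⟩ := List.mem_map.mp hp
    simpa using h.1 q hq
  · show List.IsChain _ _
    rw [List.isChain_map]
    refine List.IsChain.imp ?_ h.2
    intro a b hab x hx
    apply hab
    rw [segment_eq_image] at hx ⊢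
    obtain ⟨t, ht, rfl⟩ := hx
    exact ⟨t, ht, by ext <;> simp⟩

lemma elen_swap : ∀ P : List Pt, elen (P.map Prod.swap) = elen P
  | [] => rfl
  | [_] => rfl
  | a :: b :: r => by
    have := elen_swap (b :: r)
    simp only [List.map_cons, elen] at this ⊢
    rw [this]
    congr 1
    unfold d2
    simp [add_comm]

lemma len_eq : ∀ P : List Pt, len P = lenx P + lenx (P.map Prod.swap)
  | [] => by simp [len, lenx]
  | [_] => by simp [len, lenx]
  | a :: b :: r => by
    have := len_eq (b :: r)
    simp only [List.map_cons, len, lenx, d1] at this ⊢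
    rw [this]
    simp
    ring

lemma map_swap_swap (P : List Pt) : (P.map Prod.swap).map Prod.swap = P := by
  simp

lemma short_swap {B : Set Pt} {L : List Pt} (h : Short B L) :
    Short (Prod.swap ⁻¹' B) (L.map Prod.swap) := by
  refine ⟨pathIn_swap h.1, ?_⟩
  intro M hM hs ht
  have hM' := pathIn_swap hM
  have e : (Prod.swap ⁻¹' (Prod.swap ⁻¹' B) : Set Pt) = B := by
    ext x; simp
  rw [e] at hM'
  have := h.2 (M.map Prod.swap) hM' (by
    rw [List.head?_map, hs, List.head?_map]; simp) (by
    rw [List.getLast?_map, ht, List.getLast?_map]; simp)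
  rw [elen_swap] at this ⊢
  exact this

/-- in a simple polygon, every Euclidean shortest path between
two points is also an L1 shortest path between them (among paths constrained
to the polygon). -/
theorem euclidean_shortest_is_L1_shortest (B : Set Pt) (hB : IsSimplePolygon B)
    (s t : Pt) (hs : s ∈ B) (ht : t ∈ B) (L : List Pt)
    (hL : IsEucShortestIn B s t L) : IsL1ShortestIn B s t L := by
  obtain ⟨hcomp, hconn⟩ := polygon_compl B hB
  obtain ⟨hLP, hLs, hLt, hmin⟩ := hL
  have hshort : Short B L := ⟨hLP, fun M hM h1 h2 => hmin M hM (h1.trans hLs) (h2.trans hLt)⟩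
  refine ⟨hLP, hLs, hLt, fun M hM hMs hMt => ?_⟩
  rw [len_eq L, len_eq M]
  apply add_le_add
  · exact lenx_le B hcomp hconn L M hshort hM s t hLs hLt hMs hMt
  · refine lenx_le (Prod.swap ⁻¹' B) ?_ ?_ _ _ (short_swap hshort) (pathIn_swap hM) s.swap t.swap
      (by rw [List.head?_map, hLs]; rfl) (by rw [List.getLast?_map, hLt]; rfl)
      (by rw [List.head?_map, hMs]; rfl) (by rw [List.getLast?_map, hMt]; rfl)
    · exact (Homeomorph.prodComm ℝ ℝ).isCompact_preimage.mpr hcomp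
    · rw [← Set.preimage_compl]
      exact (Homeomorph.prodComm ℝ ℝ).isPreconnected_preimage.mpr hconn
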